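/- arXiv:2409.01413 — 8 statements merged into one kernel-verified Lean document; each statement's English description precedes it below -/
import Mathlib

section
/- Let (Ω, ℱ, ℙ) be a probability space with a filtration (ℱ_k)_{k∈ℕ}, let (Φ_k)_{k∈ℕ} be a sequence of integrable real-valued random variables adapted to (ℱ_k) with Φ_k ≥ 0 almost surely for all k, let (δ_k)_{k∈ℕ} be a sequence of nonnegative real-valued random variables adapted to (ℱ_k), and let σ > 0. If for every k, 𝔼[Φ_{k+1} | ℱ_k] ≤ Φ_k − σ·δ_k² almost surely, then Σ_{k=0}^∞ δ_k² < ∞ almost surely. -/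
open MeasureTheory

theorem stmt7 {Ω : Type*} {m : MeasurableSpace Ω} (μ : Measure Ω) [IsProbabilityMeasure μ]
    (ℱ : Filtration ℕ m) (Φ δ : ℕ → Ω → ℝ) (σ : ℝ) (hσ : 0 < σ)
    (hΦadapted : Adapted ℱ Φ) (hΦint : ∀ k, Integrable (Φ k) μ)
    (hΦnonneg : ∀ k, ∀ᵐ ω ∂μ, 0 ≤ Φ k ω)
    (hδadapted : Adapted ℱ δ) (hδnonneg : ∀ k ω, 0 ≤ δ k ω)
    (hcond : ∀ k, ∀ᵐ ω ∂μ, (μ[Φ (k + 1) | ℱ k]) ω ≤ Φ k ω - σ * (δ k ω) ^ 2) :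
    ∀ᵐ ω ∂μ, Summable (fun k => (δ k ω) ^ 2) := by
  have hδm : ∀ k, Measurable (δ k) := fun k => (hδadapted k).mono (ℱ.le k) le_rfl
  have hgm : ∀ k, Measurable (fun ω => σ * (δ k ω) ^ 2) := fun k =>
    ((hδm k).pow_const 2).const_mul σ
  have hg0 : ∀ k ω, 0 ≤ σ * (δ k ω) ^ 2 := fun k ω => by positivity
  have hdom : ∀ k, Integrable (fun ω => Φ k ω - (μ[Φ (k + 1) | ℱ k]) ω) μ := fun k =>
    (hΦint k).sub integrable_condExp
  have hle : ∀ k, ∀ᵐ ω ∂μ, σ * (δ k ω) ^ 2 ≤ Φ k ω - (μ[Φ (k + 1) | ℱ k]) ω := fun k => by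
    filter_upwards [hcond k] with ω h
    linarith
  have hgi : ∀ k, Integrable (fun ω => σ * (δ k ω) ^ 2) μ := fun k => by
    refine (hdom k).mono' (hgm k).aestronglyMeasurable ?_
    filter_upwards [hle k] with ω h
    rwa [Real.norm_of_nonneg (hg0 k ω)]
  have hstep : ∀ k, ∫ ω, σ * (δ k ω) ^ 2 ∂μ ≤ ∫ ω, Φ k ω ∂μ - ∫ ω, Φ (k + 1) ω ∂μ := fun k => by
    have h := integral_mono_ae (hgi k) (hdom k) (hle k)
    rwa [integral_sub (hΦint k) integrable_condExp, integral_condExp (ℱ.le k)] at h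
  have hsum : ∀ n, ∑ k ∈ Finset.range n, ∫ ω, σ * (δ k ω) ^ 2 ∂μ ≤ ∫ ω, Φ 0 ω ∂μ := fun n => by
    have h1 := Finset.sum_le_sum (fun k (_ : k ∈ Finset.range n) => hstep k)
    rw [Finset.sum_range_sub' (fun k => ∫ ω, Φ k ω ∂μ)] at h1
    have h2 : 0 ≤ ∫ ω, Φ n ω ∂μ := integral_nonneg_of_ae (hΦnonneg n)
    linarith
  have hs : Summable (fun k => ∫ ω, σ * (δ k ω) ^ 2 ∂μ) :=
    summable_of_sum_range_le (fun k => integral_nonneg (hg0 k)) hsum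
  have hfin : ∫⁻ ω, ∑' k, ENNReal.ofReal (σ * (δ k ω) ^ 2) ∂μ ≠ ⊤ := by
    rw [lintegral_tsum (fun k => (hgm k).ennreal_ofReal.aemeasurable)]
    simp_rw [← fun k => ofReal_integral_eq_lintegral_ofReal (hgi k)
      (Filter.Eventually.of_forall (hg0 k))]
    exact hs.tsum_ofReal_ne_top
  have hae := ae_lt_top' (AEMeasurable.ennreal_tsum
    (fun k => (hgm k).ennreal_ofReal.aemeasurable)) hfin
  filter_upwards [hae] with ω h
  have h1 := ENNReal.summable_toReal h.ne
  simp_rw [fun k => ENNReal.toReal_ofReal (hg0 k ω)] at h1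
  exact (summable_mul_left_iff hσ.ne').1 h1
end

section
/- Let f : ℝ^n → ℝ be continuously differentiable, let 1 ≤ K ≤ n, and let x* ∈ C_K. Let σ be a permutation of {1,…,n} and set I = {σ(1),…,σ(K)}. Suppose there is a sequence (v_k) in ℝ^n with v_k → x* such that for every k, |[v_k]_{σ(1)}| ≥ |[v_k]_{σ(2)}| ≥ … ≥ |[v_k]_{σ(n)}|, and a sequence (x_k) in ℝ^n with x_k → x* such that [∇f(x_k)]_i → 0 for every i ∈ I. Then |[x*]_{σ(1)}| ≥ … ≥ |[x*]_{σ(n)}|, the inactive set satisfies I_ℐ(x*) ⊆ I, and [∇f(x*)]_i = 0 for every i ∈ I_ℐ(x*); in particular, if ‖x*‖₀ = K then x* is a Basic Feasible point of f. -/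
open scoped Classical

/-- The number of nonzero components of `x` (the so-called `ℓ₀` "norm"). -/
noncomputable def zeroNorm {n : ℕ} (x : EuclideanSpace ℝ (Fin n)) : ℕ :=
  (Finset.univ.filter fun i => x i ≠ 0).card

/-- `x` is a Basic Feasible point of `f` for the cardinality constraint `‖x‖₀ ≤ K`. -/
noncomputable def BasicFeasible {n : ℕ} (f : EuclideanSpace ℝ (Fin n) → ℝ) (K : ℕ)
    (x : EuclideanSpace ℝ (Fin n)) : Prop :=
  zeroNorm x ≤ K ∧
    (zeroNorm x < K → gradient f x = 0) ∧
    (zeroNorm x = K → ∀ i, x i ≠ 0 → gradient f x i = 0)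

theorem stmt8 {n : ℕ} (f : EuclideanSpace ℝ (Fin n) → ℝ) (hf : ContDiff ℝ 1 f)
    (K : ℕ) (hK1 : 1 ≤ K) (hKn : K ≤ n)
    (xstar : EuclideanSpace ℝ (Fin n)) (hxstar : zeroNorm xstar ≤ K)
    (σ : Equiv.Perm (Fin n)) (I : Finset (Fin n))
    (hI : I = (Finset.univ.filter fun i : Fin n => (i : ℕ) < K).image σ)
    (v : ℕ → EuclideanSpace ℝ (Fin n))
    (hv : Filter.Tendsto v Filter.atTop (nhds xstar))
    (hvsort : ∀ k, ∀ i j : Fin n, i ≤ j → |v k (σ j)| ≤ |v k (σ i)|)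
    (xseq : ℕ → EuclideanSpace ℝ (Fin n))
    (hxseq : Filter.Tendsto xseq Filter.atTop (nhds xstar))
    (hgrad : ∀ i ∈ I,
      Filter.Tendsto (fun k => gradient f (xseq k) i) Filter.atTop (nhds 0)) :
    (∀ i j : Fin n, i ≤ j → |xstar (σ j)| ≤ |xstar (σ i)|) ∧
    (∀ i, xstar i ≠ 0 → i ∈ I) ∧
    (∀ i, xstar i ≠ 0 → gradient f xstar i = 0) ∧
    (zeroNorm xstar = K → BasicFeasible f K xstar) := by
  have hc : ∀ i, Continuous (fun x : EuclideanSpace ℝ (Fin n) => x i) := fun i => by fun_prop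
  have hsort : ∀ i j : Fin n, i ≤ j → |xstar (σ j)| ≤ |xstar (σ i)| := by
    intro i j hij
    have h1 := (((hc (σ j)).tendsto xstar).comp hv).abs
    have h2 := (((hc (σ i)).tendsto xstar).comp hv).abs
    exact le_of_tendsto_of_tendsto' h1 h2 (fun k => hvsort k i j hij)
  have hsub : ∀ i, xstar i ≠ 0 → i ∈ I := by
    intro i hi
    obtain ⟨j, rfl⟩ := σ.surjective i
    by_contra hn
    have hj : K ≤ (j : ℕ) := by
      by_contra hlt
      apply hn
      rw [hI]
      exact Finset.mem_image_of_mem _ (by simpa using hlt)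
    have hle : (Finset.Iic j).image σ ⊆ Finset.univ.filter fun i => xstar i ≠ 0 := by
      intro a ha
      obtain ⟨b, hb, rfl⟩ := Finset.mem_image.1 ha
      have h := hsort b j (Finset.mem_Iic.1 hb)
      have h0 := abs_pos.2 hi
      exact Finset.mem_filter.2 ⟨Finset.mem_univ _, abs_pos.1 (h0.trans_le h)⟩
    have hcard := Finset.card_le_card hle
    rw [Finset.card_image_of_injective _ σ.injective, Fin.card_Iic] at hcard
    unfold zeroNorm at hxstar
    omega
  have hg : Continuous (gradient f) := by
    have h := hf.continuous_fderiv (by norm_num)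
    exact (InnerProductSpace.toDual ℝ (EuclideanSpace ℝ (Fin n))).symm.continuous.comp h
  have hz : ∀ i, xstar i ≠ 0 → gradient f xstar i = 0 := by
    intro i hi
    have h1 := (((hc i).comp hg).tendsto xstar).comp hxseq
    exact tendsto_nhds_unique h1 (hgrad i (hsub i hi))
  exact ⟨hsort, hsub, hz, fun h => ⟨hxstar, fun h' => absurd h h'.ne, fun _ => hz⟩⟩
end

section
/- Let f : ℝ^n → ℝ be continuously differentiable, let 1 ≤ K ≤ n, and let x* ∈ C_K be a Basic Feasible point of f. If either ∇f(x*) = 0 or ‖x*‖₀ = K, then there exists L̄ > 0 such that x* is L̄-stationary. -/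
open scoped Classical

/-- `x` is `L`-stationary: it minimizes the distance to `x - (1/L) • ∇f(x)` over `C_K`. -/
noncomputable def LStationary {n : ℕ} (f : EuclideanSpace ℝ (Fin n) → ℝ) (K : ℕ) (L : ℝ)
    (x : EuclideanSpace ℝ (Fin n)) : Prop :=
  zeroNorm x ≤ K ∧
    ∀ z : EuclideanSpace ℝ (Fin n), zeroNorm z ≤ K →
      ‖x - (x - L⁻¹ • gradient f x)‖ ≤ ‖z - (x - L⁻¹ • gradient f x)‖

theorem stmt9 {n : ℕ} (f : EuclideanSpace ℝ (Fin n) → ℝ) (hf : ContDiff ℝ 1 f)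
    (K : ℕ) (hK1 : 1 ≤ K) (hKn : K ≤ n)
    (xstar : EuclideanSpace ℝ (Fin n)) (hBF : BasicFeasible f K xstar)
    (hcase : gradient f xstar = 0 ∨ zeroNorm xstar = K) :
    ∃ L : ℝ, 0 < L ∧ LStationary f K L xstar := by
  obtain ⟨h1, h2, h3⟩ := hBF
  rcases hcase with h0 | hK
  · refine ⟨1, one_pos, h1, fun z _ => ?_⟩
    simp [h0]
  have hg := h3 hK
  have hne : (Finset.univ.filter fun i => xstar i ≠ 0).Nonempty := by
    rw [← Finset.card_pos]
    change 0 < zeroNorm xstar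
    omega
  obtain ⟨i0, hi0, hmin⟩ := Finset.exists_min_image _ (fun i => |xstar i|) hne
  have hm : 0 < |xstar i0| := abs_pos.mpr (Finset.mem_filter.mp hi0).2
  have hmin' : ∀ i, xstar i ≠ 0 → |xstar i0| ≤ |xstar i| := fun i hi =>
    hmin i (Finset.mem_filter.mpr ⟨Finset.mem_univ _, hi⟩)
  generalize |xstar i0| = m at hm hmin'
  generalize hgr : gradient f xstar = g at h2 h3 hg
  have hG : 0 < ‖g‖ + 1 := by positivity
  refine ⟨(‖g‖ + 1) / m, by positivity, h1, fun z hz => ?_⟩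
  have hh : ∀ i, (((‖g‖ + 1) / m)⁻¹ * g i) ^ 2 ≤ m ^ 2 := by
    intro i
    apply sq_le_sq'
    all_goals
      have h := PiLp.norm_apply_le g i
      rw [Real.norm_eq_abs] at h
      have h' : |((‖g‖ + 1) / m)⁻¹ * g i| ≤ m := by
        rw [abs_mul, abs_of_pos (by positivity), inv_div, div_mul_eq_mul_div, div_le_iff₀ hG]
        nlinarith
      have := abs_le.mp h'
      linarith [this.1, this.2]
  rw [hgr]
  generalize ((‖g‖ + 1) / m)⁻¹ = c at hh ⊢
  rw [EuclideanSpace.norm_eq, EuclideanSpace.norm_eq]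
  apply Real.sqrt_le_sqrt
  have key : ∀ i, (c * g i) ^ 2
      + m ^ 2 * ((if xstar i ≠ 0 then (1 : ℝ) else 0) - (if z i ≠ 0 then (1 : ℝ) else 0))
      ≤ (z i - (xstar i - c * g i)) ^ 2 := by
    intro i
    have hhi := hh i
    by_cases hx : xstar i = 0
    · by_cases hzi : z i = 0
      · simp [hx, hzi]
      · simp only [hx, hzi, ne_eq, not_true_eq_false, not_false_eq_true, if_true, if_false]
        nlinarith [sq_nonneg (z i - (0 - c * g i))]
    · have hmx : m ^ 2 ≤ (xstar i) ^ 2 := by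
        rw [← sq_abs (xstar i)]
        exact pow_le_pow_left₀ hm.le (hmin' i hx) 2
      by_cases hzi : z i = 0
      · simp [hx, hzi, hg i hx]
        simpa using hmx
      · simp [hx, hzi, hg i hx]
        positivity
  have hsum := Finset.sum_le_sum (fun i (_ : i ∈ Finset.univ) => key i)
  rw [Finset.sum_add_distrib, ← Finset.mul_sum, Finset.sum_sub_distrib, Finset.sum_boole,
    Finset.sum_boole] at hsum
  have hc : ((zeroNorm z : ℕ) : ℝ) ≤ (zeroNorm xstar : ℕ) := by
    exact_mod_cast hz.trans hK.ge
  unfold zeroNorm at hc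
  have hnn := mul_nonneg (sq_nonneg m) (sub_nonneg.mpr hc)
  simp only [sub_sub_cancel, PiLp.sub_apply, PiLp.smul_apply, smul_eq_mul, Real.norm_eq_abs,
    sq_abs]
  linarith
end

section
/- Let x ∈ ℝ^n, let 1 ≤ K ≤ n, and let σ be a permutation of {1,…,n} such that |x_{σ(1)}| ≥ |x_{σ(2)}| ≥ … ≥ |x_{σ(n)}|. Define z ∈ ℝ^n by z_{σ(i)} = x_{σ(i)} for i ≤ K and z_{σ(i)} = 0 for i > K. Then z ∈ C_K and ‖z − x‖ ≤ ‖w − x‖ for every w ∈ C_K; that is, z is an orthogonal projection of x onto C_K. -/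
open scoped Classical

theorem stmt10 {n : ℕ} (x : EuclideanSpace ℝ (Fin n))
    (K : ℕ) (hK1 : 1 ≤ K) (hKn : K ≤ n)
    (σ : Equiv.Perm (Fin n))
    (hsort : ∀ i j : Fin n, i ≤ j → |x (σ j)| ≤ |x (σ i)|)
    (z : EuclideanSpace ℝ (Fin n))
    (hz : ∀ i : Fin n, z (σ i) = if (i : ℕ) < K then x (σ i) else 0) :
    zeroNorm z ≤ K ∧
      ∀ w : EuclideanSpace ℝ (Fin n), zeroNorm w ≤ K → ‖z - x‖ ≤ ‖w - x‖ := by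
  have hcard : (Finset.univ.filter fun i : Fin n => (i : ℕ) < K).card = K := by
    rw [Fin.card_filter_val_lt]
    exact min_eq_right hKn
  refine ⟨?_, ?_⟩
  · unfold zeroNorm
    calc (Finset.univ.filter fun i => z i ≠ 0).card
        ≤ ((Finset.univ.filter fun i : Fin n => (i : ℕ) < K).image σ).card := by
          apply Finset.card_le_card
          intro j hj
          simp only [Finset.mem_filter, Finset.mem_univ, true_and, Finset.mem_image] at hj ⊢
          refine ⟨σ.symm j, ?_, by simp⟩
          by_contra h
          have := hz (σ.symm j)
          rw [if_neg h] at this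
          simp at this
          exact hj this
      _ ≤ _ := Finset.card_image_le
      _ = K := hcard
  · intro w hw
    have hwc : (∑ i : Fin n, if w (σ i) ≠ 0 then (1 : ℝ) else 0) ≤ K := by
      rw [Equiv.sum_comp σ (fun j => if w j ≠ 0 then (1 : ℝ) else 0), Finset.sum_boole]
      have hw2 : ((zeroNorm w : ℕ) : ℝ) ≤ K := Nat.cast_le.mpr hw
      unfold zeroNorm at hw2
      convert hw2
    have hKc : (∑ i : Fin n, if (i : ℕ) < K then (1 : ℝ) else 0) = K := by
      rw [Finset.sum_boole, hcard]
    rw [EuclideanSpace.norm_eq, EuclideanSpace.norm_eq]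
    apply Real.sqrt_le_sqrt
    rw [← Equiv.sum_comp σ, ← Equiv.sum_comp σ (fun j => ‖(w - x) j‖ ^ 2)]
    have hlast : K - 1 < n := by omega
    have key : ∀ i : Fin n, ‖(z - x) (σ i)‖ ^ 2 +
        (x (σ ⟨K - 1, hlast⟩)) ^ 2 * ((if (i : ℕ) < K then (1 : ℝ) else 0) -
          (if w (σ i) ≠ 0 then (1 : ℝ) else 0)) ≤ ‖(w - x) (σ i)‖ ^ 2 := by
      intro i
      simp only [PiLp.sub_apply, Real.norm_eq_abs, sq_abs, hz i]
      by_cases h1 : (i : ℕ) < K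
      · have h := sq_le_sq.mpr (hsort i ⟨K - 1, hlast⟩ (Fin.le_def.mpr (by simp; omega)))
        by_cases h2 : w (σ i) = 0
        · simp [h1, h2]; linarith
        · simp [h1, h2]; positivity
      · have h := sq_le_sq.mpr (hsort ⟨K - 1, hlast⟩ i (Fin.le_def.mpr (by simp; omega)))
        by_cases h2 : w (σ i) = 0
        · simp [h1, h2]
        · simp [h1, h2]; nlinarith [sq_nonneg (w (σ i) - x (σ i))]
    have hs := Finset.sum_le_sum (fun i (_ : i ∈ Finset.univ) => key i)
    rw [Finset.sum_add_distrib, ← Finset.mul_sum, Finset.sum_sub_distrib, hKc] at hs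
    have := mul_nonneg (sq_nonneg (x (σ ⟨K - 1, hlast⟩))) (sub_nonneg.mpr hwc)
    linarith
end

section
/- Let f : ℝ^n → ℝ be continuously differentiable, let 1 ≤ K ≤ n, let L > 0, and let x* ∈ ℝ^n. Then x* is L-stationary for f if and only if ‖x*‖₀ ≤ K and, for every i ∈ {1,…,n}: |[∇f(x*)]_i| ≤ L·M_K(x*) if x*_i = 0, and [∇f(x*)]_i = 0 if x*_i ≠ 0. -/
open scoped Classical

/-- `MK K x` is the `K`-th largest value among `|x 1|, …, |x n|`, characterized as the
largest `m` such that some `K` components of `x` all have absolute value at least `m`. -/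
noncomputable def MK {n : ℕ} (K : ℕ) (x : EuclideanSpace ℝ (Fin n)) : ℝ :=
  sSup {m : ℝ | ∃ s : Finset (Fin n), s.card = K ∧ ∀ i ∈ s, m ≤ |x i|}

theorem MK_bdd {n K : ℕ} (hK1 : 1 ≤ K) (x : EuclideanSpace ℝ (Fin n)) :
    BddAbove {m : ℝ | ∃ s : Finset (Fin n), s.card = K ∧ ∀ i ∈ s, m ≤ |x i|} := by
  refine ⟨∑ i, |x i|, ?_⟩
  rintro m ⟨s, hs, hm⟩
  obtain ⟨i, hi⟩ := Finset.card_pos.1 (by omega : 0 < s.card)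
  exact (hm i hi).trans
    (Finset.single_le_sum (f := fun i => |x i|) (fun _ _ => abs_nonneg _) (Finset.mem_univ i))

theorem MK_nonneg {n K : ℕ} (hK1 : 1 ≤ K) (hKn : K ≤ n) (x : EuclideanSpace ℝ (Fin n)) :
    0 ≤ MK K x := by
  obtain ⟨s, -, hs⟩ := Finset.exists_subset_card_eq
    (s := (Finset.univ : Finset (Fin n))) (n := K) (by simpa using hKn)
  exact le_csSup (MK_bdd hK1 x) ⟨s, hs, fun _ _ => abs_nonneg _⟩

theorem MK_le {n K : ℕ} (hKn : K ≤ n) (x : EuclideanSpace ℝ (Fin n)) (b : ℝ)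
    (h : ∀ m, ∀ s : Finset (Fin n), s.card = K → (∀ i ∈ s, m ≤ |x i|) → m ≤ b) :
    MK K x ≤ b := by
  obtain ⟨s, -, hs⟩ := Finset.exists_subset_card_eq
    (s := (Finset.univ : Finset (Fin n))) (n := K) (by simpa using hKn)
  refine csSup_le (s := {m : ℝ | ∃ s : Finset (Fin n), s.card = K ∧ ∀ i ∈ s, m ≤ |x i|})
    ⟨0, s, hs, fun _ _ => abs_nonneg _⟩ ?_
  rintro m ⟨s, hs, hm⟩
  exact h m s hs hm

theorem MK_le_zero {n K : ℕ} (hKn : K ≤ n) (x : EuclideanSpace ℝ (Fin n))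
    (hx : zeroNorm x < K) : MK K x ≤ 0 := by
  apply MK_le hKn
  intro m s hs hm
  by_contra! h
  have : s ⊆ Finset.univ.filter fun i => x i ≠ 0 := by
    intro i hi
    have := hm i hi
    simp only [Finset.mem_filter, Finset.mem_univ, true_and]
    exact abs_pos.1 (by linarith)
  have := Finset.card_le_card this
  unfold zeroNorm at hx
  omega

theorem MK_le_abs {n K : ℕ} (hKn : K ≤ n) (x : EuclideanSpace ℝ (Fin n))
    (hx : zeroNorm x ≤ K) (j : Fin n) (hj : x j ≠ 0) : MK K x ≤ |x j| := by
  apply MK_le hKn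
  intro m s hs hm
  by_contra! h
  have : s ⊂ Finset.univ.filter fun i => x i ≠ 0 := by
    rw [Finset.ssubset_iff_of_subset]
    · refine ⟨j, by simpa using hj, fun hjs => ?_⟩
      have := hm j hjs
      linarith
    · intro i hi
      have := hm i hi
      have := abs_nonneg (x j)
      simp only [Finset.mem_filter, Finset.mem_univ, true_and]
      exact abs_pos.1 (by linarith)
  have := Finset.card_lt_card this
  unfold zeroNorm at hx
  omega

theorem norm_le_iff_sum {n : ℕ} (x z g : EuclideanSpace ℝ (Fin n)) :
    ‖x - (x - g)‖ ≤ ‖z - (x - g)‖ ↔ ∑ i, ((g i) ^ 2 - (z i - x i + g i) ^ 2) ≤ 0 := by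
  rw [← sq_le_sq₀ (norm_nonneg _) (norm_nonneg _), EuclideanSpace.norm_sq_eq,
    EuclideanSpace.norm_sq_eq, Finset.sum_sub_distrib, sub_nonpos]
  simp [sub_add]

theorem core {n K : ℕ} (hK1 : 1 ≤ K) (hKn : K ≤ n) (x g : EuclideanSpace ℝ (Fin n))
    (hx : zeroNorm x ≤ K) :
    (∀ z : EuclideanSpace ℝ (Fin n), zeroNorm z ≤ K →
      ∑ i, ((g i) ^ 2 - (z i - x i + g i) ^ 2) ≤ 0) ↔
    ∀ i, (x i = 0 → |g i| ≤ MK K x) ∧ (x i ≠ 0 → g i = 0) := by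
  constructor
  · intro H
    have key1 : ∀ i, (x i ≠ 0 ∨ zeroNorm x < K) → g i = 0 := by
      intro i hi
      have h := H (WithLp.toLp 2 fun k => if k = i then x k - g k else x k) ?_
      · have e : ∀ k, (g k) ^ 2 - ((if k = i then x k - g k else x k) - x k + g k) ^ 2
            = if k = i then (g k) ^ 2 else 0 := by
          intro k; split_ifs <;> ring
        simp only [e, Finset.sum_ite_eq', Finset.mem_univ, if_true] at h
        exact pow_eq_zero_iff (two_ne_zero) |>.1 (le_antisymm h (sq_nonneg _))
      · rcases hi with hi | hi
        · refine le_trans (Finset.card_le_card ?_) hx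
          intro k
          simp only [Finset.mem_filter, Finset.mem_univ, true_and]
          split_ifs with hk
          · subst hk; exact fun _ => hi
          · exact id
        · refine le_trans (Finset.card_le_card (t := insert i
            (Finset.univ.filter fun k => x k ≠ 0)) ?_) ((Finset.card_insert_le _ _).trans hi)
          intro k
          simp only [Finset.mem_filter, Finset.mem_univ, true_and, Finset.mem_insert]
          split_ifs with hk
          · exact fun _ => Or.inl hk
          · exact Or.inr
    intro i
    refine ⟨fun hi => ?_, fun hi => key1 i (Or.inl hi)⟩
    rcases hx.lt_or_eq with hlt | heq
    · rw [key1 i (Or.inr hlt), abs_zero]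
      exact MK_nonneg hK1 hKn x
    · refine le_csSup (MK_bdd hK1 x) ⟨Finset.univ.filter fun k => x k ≠ 0, heq, ?_⟩
      intro j hj
      simp only [Finset.mem_filter, Finset.mem_univ, true_and] at hj
      have hij : i ≠ j := fun h => hj (h ▸ hi)
      have hgj := key1 j (Or.inl hj)
      have h := H (WithLp.toLp 2 fun k => if k = i then x k - g k else if k = j then 0 else x k) ?_
      · have e : ∀ k, (g k) ^ 2 -
            ((if k = i then x k - g k else if k = j then 0 else x k) - x k + g k) ^ 2
            = (if k = i then (g k) ^ 2 else 0) + (if k = j then - (x k) ^ 2 else 0) := by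
          intro k
          by_cases h1 : k = i
          · subst h1; simp [hij]
          · by_cases h2 : k = j
            · subst h2; simp [h1, hgj]
            · simp [h1, h2]
        simp only [e, Finset.sum_add_distrib, Finset.sum_ite_eq', Finset.mem_univ, if_true] at h
        exact sq_le_sq.1 (by linarith)
      · have hmem : j ∈ Finset.univ.filter fun k => x k ≠ 0 := by simpa using hj
        have hc := Finset.card_erase_add_one hmem
        refine le_trans (Finset.card_le_card (t := insert i
            ((Finset.univ.filter fun k => x k ≠ 0).erase j)) ?_)
            ((Finset.card_insert_le _ _).trans (hc.le.trans hx))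
        intro k
        simp only [Finset.mem_filter, Finset.mem_univ, true_and, Finset.mem_insert,
          Finset.mem_erase]
        split_ifs with h1 h2
        · exact fun _ => Or.inl h1
        · exact fun h => absurd rfl h
        · exact fun h => Or.inr ⟨h2, h⟩
  · intro H z hz
    have hM := MK_nonneg hK1 hKn x
    have pt : ∀ i, (g i) ^ 2 - (z i - x i + g i) ^ 2 ≤
        (MK K x) ^ 2 * ((if z i ≠ 0 then 1 else 0) - (if x i ≠ 0 then 1 else 0)) := by
      intro i
      by_cases h1 : x i = 0
      · have hg : (g i) ^ 2 ≤ (MK K x) ^ 2 := sq_le_sq.2 (((H i).1 h1).trans (le_abs_self _))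
        by_cases h2 : z i = 0
        · simp [h1, h2]
        · simp only [h1, h2, ne_eq, not_true_eq_false, not_false_eq_true, if_true, if_false]
          nlinarith [sq_nonneg (z i - 0 + g i)]
      · have hg := (H i).2 h1
        have hm : (MK K x) ^ 2 ≤ (x i) ^ 2 :=
          sq_le_sq.2 (by rw [abs_of_nonneg hM]; exact MK_le_abs hKn x hx i h1)
        by_cases h2 : z i = 0
        · simp only [h1, h2, hg, ne_eq, not_true_eq_false, not_false_eq_true, if_true, if_false]
          linarith
        · simp only [h1, h2, hg, ne_eq, not_false_eq_true, if_true]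
          nlinarith [sq_nonneg (z i - x i + 0)]
    refine (Finset.sum_le_sum fun i _ => pt i).trans ?_
    have cnt : ∀ y : EuclideanSpace ℝ (Fin n),
        ∑ i, (if y i ≠ 0 then (1 : ℝ) else 0) = zeroNorm y := by
      intro y
      simp only [zeroNorm, Finset.sum_boole]
    rw [← Finset.mul_sum, Finset.sum_sub_distrib, cnt, cnt]
    rcases hx.lt_or_eq with hlt | heq
    · rw [le_antisymm (MK_le_zero hKn x hlt) hM]; simp
    · have : (zeroNorm z : ℝ) ≤ zeroNorm x := by rw [heq]; exact_mod_cast hz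
      exact mul_nonpos_of_nonneg_of_nonpos (sq_nonneg _) (by linarith)

theorem stmt11 {n : ℕ} (f : EuclideanSpace ℝ (Fin n) → ℝ) (hf : ContDiff ℝ 1 f)
    (K : ℕ) (hK1 : 1 ≤ K) (hKn : K ≤ n) (L : ℝ) (hL : 0 < L)
    (xstar : EuclideanSpace ℝ (Fin n)) :
    LStationary f K L xstar ↔
      zeroNorm xstar ≤ K ∧ ∀ i : Fin n,
        (xstar i = 0 → |gradient f xstar i| ≤ L * MK K xstar) ∧
        (xstar i ≠ 0 → gradient f xstar i = 0) := by
  unfold LStationary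
  refine and_congr_right fun hx => ?_
  simp only [norm_le_iff_sum]
  rw [core hK1 hKn xstar _ hx]
  refine forall_congr' fun i => ?_
  have e : (L⁻¹ • gradient f xstar) i = L⁻¹ * gradient f xstar i := rfl
  rw [e, abs_mul, abs_of_pos (inv_pos.2 hL), inv_mul_le_iff₀ hL]
  simp [hL.ne']
end

section
/- Let f : ℝ^n → ℝ be continuously differentiable, let 1 ≤ K ≤ n, and suppose x* ∈ C_K is L-stationary for f for some L > 0. Then x* is a Basic Feasible point of f. -/
open scoped Classical

lemma coord_zero_of_stat {n : ℕ} (x v : EuclideanSpace ℝ (Fin n)) (K : ℕ)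
    (h : ∀ z : EuclideanSpace ℝ (Fin n), zeroNorm z ≤ K → ‖x - (x - v)‖ ≤ ‖z - (x - v)‖)
    (i : Fin n) (hi : (insert i (Finset.univ.filter fun j => x j ≠ 0)).card ≤ K) :
    v i = 0 := by
  have h1 := h (x - EuclideanSpace.single i (v i)) (by
    refine le_trans (Finset.card_le_card ?_) hi
    intro j hj
    by_cases hji : j = i
    · simp [hji]
    · simpa [hji] using hj)
  have e1 : x - (x - v) = v := by abel
  have e2 : x - EuclideanSpace.single i (v i) - (x - v) = v - EuclideanSpace.single i (v i) := by
    abel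
  rw [e1, e2] at h1
  have h2 : ‖v‖ ^ 2 ≤ ‖v - EuclideanSpace.single i (v i)‖ ^ 2 := by gcongr
  rw [@norm_sub_sq_real] at h2
  simp [EuclideanSpace.inner_single_right] at h2
  nlinarith [sq_nonneg (v i)]

theorem stmt12 {n : ℕ} (f : EuclideanSpace ℝ (Fin n) → ℝ) (hf : ContDiff ℝ 1 f)
    (K : ℕ) (hK1 : 1 ≤ K) (hKn : K ≤ n)
    (xstar : EuclideanSpace ℝ (Fin n)) (hxstar : zeroNorm xstar ≤ K)
    (L : ℝ) (hL : 0 < L) (hstat : LStationary f K L xstar) :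
    BasicFeasible f K xstar := by
  have key : ∀ i, (insert i (Finset.univ.filter fun j => xstar j ≠ 0)).card ≤ K →
      gradient f xstar i = 0 := by
    intro i hi
    have h := coord_zero_of_stat xstar (L⁻¹ • gradient f xstar) K hstat.2 i hi
    simpa [hL.ne'] using h
  refine ⟨hxstar, fun hlt => ?_, fun _ i hi => ?_⟩
  · ext i
    exact key i ((Finset.card_insert_le _ _).trans hlt)
  · refine key i ?_
    rw [Finset.insert_eq_of_mem (by simpa using hi)]
    exact hxstar
end

section
/- Let f : ℝ^n → ℝ be differentiable with ∇f Lipschitz continuous with constant L(f) > 0, i.e., ‖∇f(x) − ∇f(y)‖ ≤ L(f)‖x − y‖ for all x, y ∈ ℝ^n, and let 1 ≤ K ≤ n. If x* is an optimal solution of min{f(x) : x ∈ C_K}, then for every L > L(f), x* is L-stationary for f. -/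
open scoped Classical

theorem descent_aux {n : ℕ} (f : EuclideanSpace ℝ (Fin n) → ℝ) (hf : Differentiable ℝ f)
    (Lf : ℝ)
    (hLip : ∀ x y : EuclideanSpace ℝ (Fin n),
      ‖gradient f x - gradient f y‖ ≤ Lf * ‖x - y‖)
    (x d : EuclideanSpace ℝ (Fin n)) :
    f (x + d) ≤ f x + inner ℝ (gradient f x) d + Lf / 2 * ‖d‖ ^ 2 := by
  have hder : ∀ t : ℝ, HasDerivAt
      (fun t : ℝ => f (x + t • d) - t * inner ℝ (gradient f x) d - Lf / 2 * ‖d‖ ^ 2 * t ^ 2)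
      (inner ℝ (gradient f (x + t • d)) d - inner ℝ (gradient f x) d - Lf * ‖d‖ ^ 2 * t) t := by
    intro t
    have h1 : HasDerivAt (fun t : ℝ => x + t • d) d t := by
      simpa using ((hasDerivAt_id t).smul_const d).const_add x
    have h2 := (hf (x + t • d)).hasGradientAt.hasFDerivAt.comp_hasDerivAt t h1
    have h3 := (hasDerivAt_id t).mul_const (inner ℝ (gradient f x) d : ℝ)
    have h4 := (hasDerivAt_pow 2 t).const_mul (Lf / 2 * ‖d‖ ^ 2)
    refine ((h2.sub h3).sub h4).congr_deriv ?_
    rw [InnerProductSpace.toDual_apply_apply]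
    norm_num
    ring
  have hanti := antitoneOn_of_deriv_nonpos (convex_Icc (0 : ℝ) 1)
    (fun t _ => (hder t).continuousAt.continuousWithinAt)
    (fun t _ => (hder t).differentiableAt.differentiableWithinAt)
    (fun t ht => by
      rw [(hder t).deriv, ← inner_sub_left]
      rw [interior_Icc] at ht
      have h1 := real_inner_le_norm (gradient f (x + t • d) - gradient f x) d
      have h2 := hLip (x + t • d) x
      rw [add_sub_cancel_left, norm_smul, Real.norm_of_nonneg ht.1.le] at h2
      have h3 := mul_le_mul_of_nonneg_right h2 (norm_nonneg d)
      nlinarith)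
  have h := hanti (Set.left_mem_Icc.2 zero_le_one) (Set.right_mem_Icc.2 zero_le_one) zero_le_one
  simp only [zero_smul, one_smul, add_zero] at h
  linarith

theorem stmt13 {n : ℕ} (f : EuclideanSpace ℝ (Fin n) → ℝ) (hf : Differentiable ℝ f)
    (Lf : ℝ) (hLf : 0 < Lf)
    (hLip : ∀ x y : EuclideanSpace ℝ (Fin n),
      ‖gradient f x - gradient f y‖ ≤ Lf * ‖x - y‖)
    (K : ℕ) (hK1 : 1 ≤ K) (hKn : K ≤ n)
    (xstar : EuclideanSpace ℝ (Fin n)) (hfeas : zeroNorm xstar ≤ K)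
    (hopt : ∀ x : EuclideanSpace ℝ (Fin n), zeroNorm x ≤ K → f xstar ≤ f x) :
    ∀ L : ℝ, L > Lf → LStationary f K L xstar := by
  intro L hL
  refine ⟨hfeas, fun z hz => ?_⟩
  have hL0 : 0 < L := hLf.trans hL
  have h1 := descent_aux f hf Lf hLip xstar (z - xstar)
  rw [add_sub_cancel] at h1
  have h2 := hopt z hz
  have e1 : xstar - (xstar - L⁻¹ • gradient f xstar) = L⁻¹ • gradient f xstar := by abel
  have e2 : z - (xstar - L⁻¹ • gradient f xstar)
      = (z - xstar) + L⁻¹ • gradient f xstar := by abel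
  rw [e1, e2]
  refine (sq_le_sq₀ (norm_nonneg _) (norm_nonneg _)).1 ?_
  rw [norm_add_sq_real, inner_smul_right, real_inner_comm]
  have h3 : 0 ≤ inner ℝ (gradient f xstar) (z - xstar) + L / 2 * ‖z - xstar‖ ^ 2 := by
    nlinarith [sq_nonneg ‖z - xstar‖]
  have h4 := mul_nonneg (by positivity : 0 ≤ 2 * L⁻¹) h3
  have h5 : 2 * L⁻¹ * (inner ℝ (gradient f xstar) (z - xstar) + L / 2 * ‖z - xstar‖ ^ 2)
      = ‖z - xstar‖ ^ 2 + 2 * (L⁻¹ * inner ℝ (gradient f xstar) (z - xstar)) := by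
    field_simp
    ring
  linarith
end

section
/- Let f : ℝ^n → ℝ be continuously differentiable and let 1 ≤ K ≤ n. If x* is an optimal solution of min{f(x) : x ∈ C_K}, i.e., x* ∈ C_K and f(x*) ≤ f(x) for all x ∈ C_K, then x* is a Basic Feasible point of f. -/
open scoped Classical

theorem grad_coord_zero {n : ℕ} (f : EuclideanSpace ℝ (Fin n) → ℝ) (hf : ContDiff ℝ 1 f)
    (x : EuclideanSpace ℝ (Fin n)) (i : Fin n)
    (h : ∀ t : ℝ, f x ≤ f (x + t • EuclideanSpace.single i (1 : ℝ))) :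
    gradient f x i = 0 := by
  have hd : DifferentiableAt ℝ f x := (hf.differentiable (by norm_num)) x
  have hg := hd.hasGradientAt.hasFDerivAt
  have hl : HasLineDerivAt ℝ f _ x (EuclideanSpace.single i (1 : ℝ)) :=
    hg.hasLineDerivAt (EuclideanSpace.single i (1 : ℝ))
  have hmin : IsLocalMin (fun t : ℝ => f (x + t • EuclideanSpace.single i (1 : ℝ))) 0 := by
    refine Filter.Eventually.of_forall fun t => ?_
    simpa using h t
  have h0 := hmin.hasDerivAt_eq_zero hl
  rw [InnerProductSpace.toDual_apply_apply, EuclideanSpace.inner_single_right] at h0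
  simpa using h0

theorem stmt14 {n : ℕ} (f : EuclideanSpace ℝ (Fin n) → ℝ) (hf : ContDiff ℝ 1 f)
    (K : ℕ) (hK1 : 1 ≤ K) (hKn : K ≤ n)
    (xstar : EuclideanSpace ℝ (Fin n)) (hfeas : zeroNorm xstar ≤ K)
    (hopt : ∀ x : EuclideanSpace ℝ (Fin n), zeroNorm x ≤ K → f xstar ≤ f x) :
    BasicFeasible f K xstar := by
  refine ⟨hfeas, fun hlt => ?_, fun _ i hi => ?_⟩
  · ext i
    refine grad_coord_zero f hf xstar i fun t => hopt _ ?_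
    refine le_trans ?_ (Nat.succ_le_of_lt hlt)
    unfold zeroNorm
    refine le_trans (Finset.card_le_card ?_) (Finset.card_insert_le i _)
    intro j hj
    by_cases hji : j = i
    · simp [hji]
    · simpa [hji] using hj
  · refine grad_coord_zero f hf xstar i fun t => hopt _ (le_trans ?_ hfeas)
    unfold zeroNorm
    refine Finset.card_le_card ?_
    intro j hj
    by_cases hji : j = i
    · subst hji
      simpa using hi
    · simpa [hji] using hj
end
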